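/- Let V be a non-zero finite-dimensional simple U-module. Then every eigenvalue of the operator Z on V has multiplicity one: for each λ ∈ ℂ, the eigenspace ker(Z − λ·id) ⊆ V has dimension at most 1. -/

import Mathlib

/-!
Since `X` anticommutes with `Z - 1` and `Y` with `Z + 1`, the element
`C = 4 X² + (Z - 1)² = 4 Y² + (Z + 1)²` is central, `X` maps the eigenspace `E μ` of `Z` into
`E (2 - μ)` and `Y` maps it into `E (-2 - μ)`. On an eigenspace `X²` and `Y²` are polynomials in
`C`, so for a `C`-stable `P ≤ E μ` the submodule generated by `P` is the sum of the images of `P`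
under the alternating words in `X` and `Y`. In characteristic zero a non-empty alternating word
sends `E μ` to itself only if `μ` is an odd integer, and then only one such word `T` does. Hence in
a simple module `E μ` has no proper non-zero subspace stable under the commuting operators `C` and
`T`, and by the Nullstellensatz it is at most a line.
-/

open Module Module.End

section CommutingOperators

variable (K : Type*) [Field K] [IsAlgClosed K]

theorem finrank_eq_one_of_isSimpleModule_of_finiteType (A : Type*) {M : Type*} [CommRing A]
    [Algebra K A] [Algebra.FiniteType K A] [AddCommGroup M] [Module K M] [Module A M]
    [IsScalarTower K A M] [IsSimpleModule A M] : finrank K M = 1 := by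
  obtain ⟨I, hI, ⟨e⟩⟩ := isSimpleModule_iff_quot_maximal.mp ‹IsSimpleModule A M›
  let := Ideal.Quotient.field I
  have : Module.Finite K (A ⧸ I) := finite_of_finite_type_of_isJacobsonRing K (A ⧸ I)
  rw [(e.restrictScalars K).finrank_eq]
  exact finrank_of_bijective_algebraMap IsAlgClosed.algebraMap_bijective_of_isIntegral

variable {K}

open scoped IsMulCommutative in
theorem rank_le_one_of_commute_of_simple {ι M : Type*} [Finite ι] [AddCommGroup M] [Module K M]
    (f : ι → End K M) (hcomm : ∀ i j, Commute (f i) (f j))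
    (hsimple : ∀ W : Submodule K M, (∀ i, W ∈ (f i).invtSubmodule) → W = ⊥ ∨ W = ⊤) :
    Module.rank K M ≤ 1 := by
  cases subsingleton_or_nontrivial M
  · simp
  let A := Algebra.adjoin K (Set.range f)
  have : IsMulCommutative A := Algebra.isMulCommutative_adjoin K (by
    rintro _ ⟨i, rfl⟩ _ ⟨j, rfl⟩
    exact hcomm i j)
  have : Algebra.FiniteType K A :=
    A.fg_iff_finiteType.mp (Subalgebra.fg_def.mpr ⟨_, Set.finite_range f, rfl⟩)
  have : IsSimpleModule A M :=
    { eq_bot_or_eq_top := fun W ↦ by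
        simpa using hsimple (W.restrictScalars K) fun i _ hw ↦
          W.smul_mem ⟨f i, Algebra.subset_adjoin ⟨i, rfl⟩⟩ hw }
  exact (rank_eq_one_iff_finrank_eq_one.mpr
    (finrank_eq_one_of_isSimpleModule_of_finiteType K A)).le

theorem rank_submodule_le_one_of_commute_of_simple {ι M : Type*} [Finite ι] [AddCommGroup M]
    [Module K M] {E : Submodule K M} (f : ι → End K M) (hcomm : ∀ i j, Commute (f i) (f j))
    (hE : ∀ i, E ∈ (f i).invtSubmodule)
    (hsimple : ∀ P ≤ E, (∀ i, P ∈ (f i).invtSubmodule) → P = ⊥ ∨ P = E) :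
    Module.rank K E ≤ 1 := by
  refine rank_le_one_of_commute_of_simple
    (fun i ↦ (f i).restrict ((mem_invtSubmodule_iff_forall_mem_of_mem _).mp (hE i)))
    (fun i j ↦ LinearMap.restrict_commute (hcomm i j) _ _) fun W hW ↦ ?_
  have hinj := Submodule.map_injective_of_injective E.subtype_injective
  have hinv (i : ι) : W.map E.subtype ∈ (f i).invtSubmodule := by
    rintro _ ⟨w, hw, rfl⟩
    exact ⟨_, hW i hw, rfl⟩
  refine (hsimple _ (Submodule.map_subtype_le E W) hinv).imp
    (fun hbot ↦ hinj ?_) fun htop ↦ hinj ?_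
  · rw [hbot, Submodule.map_bot]
  · rw [htop, Submodule.map_subtype_top]

end CommutingOperators

theorem eigenspace_neg {R M : Type*} [CommRing R] [AddCommGroup M] [Module R M] (f : End R M)
    (μ : R) : eigenspace (-f) (-μ) = eigenspace f μ := by
  ext x
  simp

/-- The defining relations of the algebra `U`, for a triple of elements of an arbitrary ring. -/
structure IsUTriple {A : Type*} [Ring A] (X Y Z : A) : Prop where
  X_mul_Z_add_Z_mul_X : X * Z + Z * X = 2 * X
  Y_mul_Z_add_Z_mul_Y : Y * Z + Z * Y = -(2 * Y)
  X_mul_X_sub_Y_mul_Y : X * X - Y * Y = Z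

/-- The Casimir element `4 X² + (Z - 1)²`, which is central in the algebra generated by a
`U`-triple `(X, Y, Z)`. The factor `4` avoids denominators. -/
def casimir {A : Type*} [Ring A] (X Z : A) : A :=
  4 * X ^ 2 + (Z - 1) ^ 2

theorem apply_apply_mem_of_casimir_apply_mem {K V : Type*} [Field K] [NeZero (2 : K)]
    [AddCommGroup V] [Module K V] {X Z : End K V} {P : Submodule K V} {μ : K} {x : V}
    (hx : x ∈ eigenspace Z μ) (hxP : x ∈ P) (hC : casimir X Z x ∈ P) : X (X x) ∈ P := by
  have hZ : (Z - 1) x = (μ - 1) • x := by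
    simp [sub_smul, mem_eigenspace_iff.mp hx]
  have hCx : casimir X Z x = (4 : K) • X (X x) + (μ - 1) ^ 2 • x := by
    simp [casimir, pow_two, hZ, mul_smul, ofNat_smul_eq_nsmul]
  have h4 : (4 : K) ≠ 0 := by
    rw [show (4 : K) = 2 * 2 by norm_num]
    exact mul_ne_zero two_ne_zero two_ne_zero
  rw [← P.smul_mem_iff h4, eq_sub_of_add_eq hCx.symm]
  exact P.sub_mem hC (P.smul_mem _ hxP)

namespace IsUTriple

section Ring

variable {A : Type*} [Ring A] {X Y Z : A}

protected theorem symm (h : IsUTriple X Y Z) : IsUTriple Y X (-Z) where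
  X_mul_Z_add_Z_mul_X := by rw [mul_neg, neg_mul, ← neg_add, h.Y_mul_Z_add_Z_mul_Y, neg_neg]
  Y_mul_Z_add_Z_mul_Y := by rw [mul_neg, neg_mul, ← neg_add, h.X_mul_Z_add_Z_mul_X]
  X_mul_X_sub_Y_mul_Y := by rw [← neg_sub, h.X_mul_X_sub_Y_mul_Y]

theorem casimir_symm (h : IsUTriple X Y Z) : casimir Y (-Z) = casimir X Z := by
  have hX : X ^ 2 = Y ^ 2 + Z := by rw [← h.X_mul_X_sub_Y_mul_Y]; noncomm_ring
  rw [casimir, casimir, hX]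
  noncomm_ring

theorem commute_casimir_X (h : IsUTriple X Y Z) : Commute (casimir X Z) X := by
  have hanti : SemiconjBy X (Z - 1) (-(Z - 1)) := by
    rw [SemiconjBy, mul_sub, eq_sub_of_add_eq h.X_mul_Z_add_Z_mul_X]
    noncomm_ring
  have hsq : Commute X ((Z - 1) ^ 2) :=
    neg_sq (Z - 1) ▸ hanti.pow_right 2
  exact (((Commute.ofNat_right X 4).mul_right ((Commute.refl X).pow_right 2)).add_right hsq).symm

theorem commute_casimir_Y (h : IsUTriple X Y Z) : Commute (casimir X Z) Y :=
  h.casimir_symm ▸ h.symm.commute_casimir_X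

theorem commute_casimir_Z (h : IsUTriple X Y Z) : Commute (casimir X Z) Z := by
  have hcomm : Commute (casimir X Z) (X * X - Y * Y) :=
    (h.commute_casimir_X.mul_right h.commute_casimir_X).sub_right
      (h.commute_casimir_Y.mul_right h.commute_casimir_Y)
  rwa [h.X_mul_X_sub_Y_mul_Y] at hcomm

theorem commute_casimir_mul_pow (h : IsUTriple X Y Z) (k : ℕ) :
    Commute (casimir X Z) ((Y * X) ^ k) :=
  (h.commute_casimir_Y.mul_right h.commute_casimir_X).pow_right k

end Ring

section Eigenspaces

variable {R M : Type*} [CommRing R] [AddCommGroup M] [Module R M] {X Y Z : End R M} {μ : R} {x : M}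

theorem X_apply_mem_eigenspace (h : IsUTriple X Y Z) (hx : x ∈ eigenspace Z μ) :
    X x ∈ eigenspace Z (2 - μ) := by
  have hrel : X (Z x) + Z (X x) = (2 : R) • X x := by
    simpa [two_mul, two_smul] using LinearMap.congr_fun h.X_mul_Z_add_Z_mul_X x
  rw [mem_eigenspace_iff] at hx ⊢
  rw [hx, map_smul] at hrel
  rw [sub_smul, ← hrel, add_sub_cancel_left]

theorem Y_apply_mem_eigenspace (h : IsUTriple X Y Z) (hx : x ∈ eigenspace Z μ) :
    Y x ∈ eigenspace Z (-2 - μ) := by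
  rw [← eigenspace_neg, show -(-2 - μ) = 2 - -μ by ring]
  exact h.symm.X_apply_mem_eigenspace ((eigenspace_neg Z μ).symm ▸ hx)

theorem mul_pow_apply_mem_eigenspace (h : IsUTriple X Y Z) (hx : x ∈ eigenspace Z μ) (k : ℕ) :
    ((Y * X) ^ k) x ∈ eigenspace Z (μ - 4 * k) := by
  induction k with
  | zero => simpa using hx
  | succ k ih =>
    rw [pow_succ', show μ - 4 * ((k + 1 : ℕ) : R) = -2 - (2 - (μ - 4 * k)) by push_cast; ring]
    exact h.Y_apply_mem_eigenspace (h.X_apply_mem_eigenspace ih)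

theorem X_mul_pow_apply_mem_eigenspace (h : IsUTriple X Y Z) (hx : x ∈ eigenspace Z μ) (k : ℕ) :
    (X * (Y * X) ^ k) x ∈ eigenspace Z (2 - (μ - 4 * k)) :=
  h.X_apply_mem_eigenspace (h.mul_pow_apply_mem_eigenspace hx k)

theorem X_mul_pow_apply_mem_eigenspace_self (h : IsUTriple X Y Z) {k : ℕ} (hk : μ = 2 * k + 1)
    (hx : x ∈ eigenspace Z μ) : (X * (Y * X) ^ k) x ∈ eigenspace Z μ := by
  convert h.X_mul_pow_apply_mem_eigenspace hx k using 2
  linear_combination 2 * hk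

theorem eigenspace_mem_invtSubmodule_casimir (h : IsUTriple X Y Z) (μ : R) :
    eigenspace Z μ ∈ (casimir X Z).invtSubmodule :=
  mapsTo_genEigenspace_of_comm h.commute_casimir_Z.symm μ 1

end Eigenspaces

end IsUTriple

section Orbit

variable {R M : Type*} [CommRing R] [AddCommGroup M] [Module R M]

/-- The sum of the images of `P` under the alternating words `1, X, Y X, X Y X, …` in `X` and `Y`
whose first letter to act is `X`. -/
def alternatingHalfOrbit (X Y : End R M) (P : Submodule R M) : Submodule R M :=
  ⨆ k : ℕ, P.map ((Y * X) ^ k) ⊔ P.map (X * (Y * X) ^ k)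

/-- The sum of the images of `P` under all alternating words in `X` and `Y`. For a
`U`-triple and a `casimir`-stable subspace `P` of an eigenspace of `Z`, it is the submodule that
`P` generates. -/
def alternatingOrbit (X Y : End R M) (P : Submodule R M) : Submodule R M :=
  alternatingHalfOrbit X Y P ⊔ alternatingHalfOrbit Y X P

variable {X Y : End R M} {P Q : Submodule R M} {x : M}

theorem alternatingHalfOrbit_le_iff : alternatingHalfOrbit X Y P ≤ Q ↔
    ∀ k : ℕ, ∀ x ∈ P, ((Y * X) ^ k) x ∈ Q ∧ (X * (Y * X) ^ k) x ∈ Q := by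
  simp only [alternatingHalfOrbit, iSup_le_iff, sup_le_iff, Submodule.map_le_iff_le_comap]
  exact forall_congr' fun k ↦ forall₂_and.symm

theorem mul_pow_apply_mem_alternatingHalfOrbit (hx : x ∈ P) (k : ℕ) :
    ((Y * X) ^ k) x ∈ alternatingHalfOrbit X Y P :=
  (alternatingHalfOrbit_le_iff.mp le_rfl k x hx).1

theorem mul_mul_pow_apply_mem_alternatingHalfOrbit (hx : x ∈ P) (k : ℕ) :
    (X * (Y * X) ^ k) x ∈ alternatingHalfOrbit X Y P :=
  (alternatingHalfOrbit_le_iff.mp le_rfl k x hx).2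

theorem alternatingOrbit_comm (X Y : End R M) (P : Submodule R M) :
    alternatingOrbit X Y P = alternatingOrbit Y X P :=
  sup_comm _ _

theorem le_alternatingOrbit : P ≤ alternatingOrbit X Y P :=
  fun _ hx ↦ Submodule.mem_sup_left (mul_pow_apply_mem_alternatingHalfOrbit hx 0)

end Orbit

namespace IsUTriple

variable {K V : Type*} [Field K] [AddCommGroup V] [Module K V] {X Y Z : End K V} {μ : K}
  {P : Submodule K V}

theorem mem_invtSubmodule_Z (h : IsUTriple X Y Z) (hX : P ∈ X.invtSubmodule)
    (hY : P ∈ Y.invtSubmodule) : P ∈ Z.invtSubmodule := by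
  intro x hx
  rw [← h.X_mul_X_sub_Y_mul_Y]
  exact P.sub_mem (hX (hX hx)) (hY (hY hx))

section Invariance

variable [NeZero (2 : K)]

theorem alternatingHalfOrbit_mem_invtSubmodule_X (h : IsUTriple X Y Z) (hP : P ≤ eigenspace Z μ)
    (hC : P ∈ (casimir X Z).invtSubmodule) : alternatingHalfOrbit X Y P ∈ X.invtSubmodule := by
  rw [mem_invtSubmodule, alternatingHalfOrbit_le_iff]
  intro k x hx
  rw [mem_invtSubmodule_iff_forall_mem_of_mem] at hC
  simp only [Submodule.mem_comap, mul_apply]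
  refine ⟨mul_mul_pow_apply_mem_alternatingHalfOrbit hx k, ?_⟩
  apply apply_apply_mem_of_casimir_apply_mem (h.mul_pow_apply_mem_eigenspace (hP hx) k)
    (mul_pow_apply_mem_alternatingHalfOrbit hx k)
  rw [← mul_apply, (h.commute_casimir_mul_pow k).eq, mul_apply]
  exact mul_pow_apply_mem_alternatingHalfOrbit (hC x hx) k

theorem alternatingHalfOrbit_le_comap_Y_alternatingOrbit (h : IsUTriple X Y Z)
    (hP : P ≤ eigenspace Z μ) (hC : P ∈ (casimir X Z).invtSubmodule) :
    alternatingHalfOrbit X Y P ≤ (alternatingOrbit X Y P).comap Y := by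
  rw [alternatingHalfOrbit_le_iff]
  intro k x hx
  rw [mem_invtSubmodule_iff_forall_mem_of_mem] at hC
  simp only [Submodule.mem_comap, ← mul_apply]
  constructor
  · cases k with
    | zero => exact Submodule.mem_sup_right (mul_mul_pow_apply_mem_alternatingHalfOrbit hx 0)
    | succ k =>
      have hxk := h.X_mul_pow_apply_mem_eigenspace (hP hx) k
      rw [← eigenspace_neg] at hxk
      rw [pow_succ', mul_assoc Y X, mul_apply, mul_apply]
      apply Submodule.mem_sup_left
      apply apply_apply_mem_of_casimir_apply_mem hxk
        (mul_mul_pow_apply_mem_alternatingHalfOrbit hx k)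
      rw [h.casimir_symm, ← mul_apply,
        (h.commute_casimir_X.mul_right (h.commute_casimir_mul_pow k)).eq, mul_apply]
      exact mul_mul_pow_apply_mem_alternatingHalfOrbit (hC x hx) k
  · rw [← mul_assoc, ← pow_succ']
    exact Submodule.mem_sup_left (mul_pow_apply_mem_alternatingHalfOrbit hx (k + 1))

theorem alternatingOrbit_mem_invtSubmodule_X (h : IsUTriple X Y Z) (hP : P ≤ eigenspace Z μ)
    (hC : P ∈ (casimir X Z).invtSubmodule) : alternatingOrbit X Y P ∈ X.invtSubmodule := by
  have hXY : alternatingHalfOrbit X Y P ≤ (alternatingOrbit X Y P).comap X :=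
    ((mem_invtSubmodule _).mp (h.alternatingHalfOrbit_mem_invtSubmodule_X hP hC)).trans
      (Submodule.comap_mono le_sup_left)
  have hYX : alternatingHalfOrbit Y X P ≤ (alternatingOrbit Y X P).comap X :=
    h.symm.alternatingHalfOrbit_le_comap_Y_alternatingOrbit
      (hP.trans (eigenspace_neg Z μ).ge) (h.casimir_symm ▸ hC)
  exact sup_le hXY (alternatingOrbit_comm X Y P ▸ hYX)

theorem alternatingOrbit_mem_invtSubmodule_Y (h : IsUTriple X Y Z) (hP : P ≤ eigenspace Z μ)
    (hC : P ∈ (casimir X Z).invtSubmodule) : alternatingOrbit X Y P ∈ Y.invtSubmodule := by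
  rw [alternatingOrbit_comm]
  exact h.symm.alternatingOrbit_mem_invtSubmodule_X (hP.trans (eigenspace_neg Z μ).ge)
    (h.casimir_symm ▸ hC)

end Invariance

variable [CharZero K]

theorem alternatingHalfOrbit_le_sup_iSup_eigenspace (h : IsUTriple X Y Z) (hP : P ≤ eigenspace Z μ)
    (hloop : ∀ k : ℕ, μ = 2 * k + 1 → P ∈ (X * (Y * X) ^ k).invtSubmodule) :
    alternatingHalfOrbit X Y P ≤ P ⊔ ⨆ ν ≠ μ, eigenspace Z ν := by
  have hother {ν : K} {x : V} (hν : ν ≠ μ) (hx : x ∈ eigenspace Z ν) :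
      x ∈ P ⊔ ⨆ ν ≠ μ, eigenspace Z ν :=
    Submodule.mem_sup_right (Submodule.mem_iSup_of_mem ν (Submodule.mem_iSup_of_mem hν hx))
  refine alternatingHalfOrbit_le_iff.mpr fun k x hx ↦ ⟨?_, ?_⟩
  · cases k with
    | zero => exact Submodule.mem_sup_left hx
    | succ k =>
      refine hother (fun hk ↦ ?_) (h.mul_pow_apply_mem_eigenspace (hP hx) (k + 1))
      exact Nat.cast_add_one_ne_zero (R := K) k (by push_cast at hk; linear_combination -hk / 4)
  · by_cases hk : μ = 2 * k + 1
    · exact Submodule.mem_sup_left (hloop k hk hx)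
    · exact hother (fun hk' ↦ hk (by linear_combination -hk' / 2))
        (h.X_mul_pow_apply_mem_eigenspace (hP hx) k)

theorem alternatingOrbit_inf_eigenspace (h : IsUTriple X Y Z) (hP : P ≤ eigenspace Z μ)
    (hX : ∀ k : ℕ, μ = 2 * k + 1 → P ∈ (X * (Y * X) ^ k).invtSubmodule)
    (hY : ∀ k : ℕ, -μ = 2 * k + 1 → P ∈ (Y * (X * Y) ^ k).invtSubmodule) :
    alternatingOrbit X Y P ⊓ eigenspace Z μ = P := by
  have hneg : ⨆ ν ≠ -μ, eigenspace (-Z) ν = ⨆ ν ≠ μ, eigenspace Z ν :=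
    (Equiv.neg K).iSup_congr fun ν ↦ by
      rw [Equiv.neg_apply, ← eigenspace_neg, neg_neg, ne_eq, ne_eq, neg_eq_iff_eq_neg]
  have horbit : alternatingOrbit X Y P ≤ P ⊔ ⨆ ν ≠ μ, eigenspace Z ν :=
    sup_le (h.alternatingHalfOrbit_le_sup_iSup_eigenspace hP hX)
      (hneg ▸ h.symm.alternatingHalfOrbit_le_sup_iSup_eigenspace
        (hP.trans (eigenspace_neg Z μ).ge) hY)
  refine le_antisymm ?_ (le_inf le_alternatingOrbit hP)
  calc alternatingOrbit X Y P ⊓ eigenspace Z μ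
      ≤ (P ⊔ ⨆ ν ≠ μ, eigenspace Z ν) ⊓ eigenspace Z μ := inf_le_inf_right _ horbit
    _ = P ⊔ (⨆ ν ≠ μ, eigenspace Z ν) ⊓ eigenspace Z μ := sup_inf_assoc_of_le _ hP
    _ = P := by rw [(eigenspaces_iSupIndep Z μ).symm.eq_bot, sup_bot_eq]

theorem exists_commute_casimir_eq_loop (h : IsUTriple X Y Z) (μ : K) :
    ∃ T : End K V, Commute (casimir X Z) T ∧ eigenspace Z μ ∈ T.invtSubmodule ∧
      (∀ k : ℕ, μ = 2 * k + 1 → X * (Y * X) ^ k = T) ∧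
      (∀ k : ℕ, -μ = 2 * k + 1 → Y * (X * Y) ^ k = T) := by
  have hdisj {k l : ℕ} (hk : μ = 2 * k + 1) (hl : -μ = 2 * l + 1) : False :=
    Nat.cast_add_one_ne_zero (R := K) (k + l) (by push_cast; linear_combination (-hk - hl) / 2)
  have huniq {ν : K} {k l : ℕ} (hk : ν = 2 * k + 1) (hl : ν = 2 * l + 1) : k = l :=
    Nat.cast_injective (R := K) (by linear_combination (hl - hk) / 2)
  by_cases hpos : ∃ k : ℕ, μ = 2 * k + 1
  · obtain ⟨k, hk⟩ := hpos
    exact ⟨X * (Y * X) ^ k, h.commute_casimir_X.mul_right (h.commute_casimir_mul_pow k),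
      fun _ ↦ h.X_mul_pow_apply_mem_eigenspace_self hk,
      fun l hl ↦ by rw [huniq hk hl], fun l hl ↦ (hdisj hk hl).elim⟩
  by_cases hneg : ∃ k : ℕ, -μ = 2 * k + 1
  · obtain ⟨k, hk⟩ := hneg
    refine ⟨Y * (X * Y) ^ k, ?_, ?_, fun l hl ↦ (hdisj hl hk).elim,
      fun l hl ↦ by rw [huniq hk hl]⟩
    · rw [← h.casimir_symm]
      exact h.symm.commute_casimir_X.mul_right (h.symm.commute_casimir_mul_pow k)
    · rw [← eigenspace_neg]
      exact fun _ ↦ h.symm.X_mul_pow_apply_mem_eigenspace_self hk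
  · exact ⟨1, Commute.one_right _, fun _ hx ↦ hx, fun k hk ↦ (hpos ⟨k, hk⟩).elim,
      fun k hk ↦ (hneg ⟨k, hk⟩).elim⟩

theorem eq_bot_or_eq_eigenspace_of_simple (h : IsUTriple X Y Z)
    (hsimple : ∀ W : Submodule K V, W ∈ X.invtSubmodule → W ∈ Y.invtSubmodule →
      W ∈ Z.invtSubmodule → W = ⊥ ∨ W = ⊤)
    (hP : P ≤ eigenspace Z μ) (hC : P ∈ (casimir X Z).invtSubmodule)
    (hX : ∀ k : ℕ, μ = 2 * k + 1 → P ∈ (X * (Y * X) ^ k).invtSubmodule)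
    (hY : ∀ k : ℕ, -μ = 2 * k + 1 → P ∈ (Y * (X * Y) ^ k).invtSubmodule) :
    P = ⊥ ∨ P = eigenspace Z μ := by
  have hWX := h.alternatingOrbit_mem_invtSubmodule_X hP hC
  have hWY := h.alternatingOrbit_mem_invtSubmodule_Y hP hC
  rw [← h.alternatingOrbit_inf_eigenspace hP hX hY]
  refine (hsimple _ hWX hWY (h.mem_invtSubmodule_Z hWX hWY)).imp
    (fun hbot ↦ ?_) fun htop ↦ ?_
  · rw [hbot, bot_inf_eq]
  · rw [htop, top_inf_eq]

end IsUTriple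

theorem UF_eigenvalues_multiplicity_one_general {K V : Type*} [Field K] [IsAlgClosed K] [CharZero K]
    [AddCommGroup V] [Module K V] {X Y Z : End K V} (h : IsUTriple X Y Z)
    (hsimple : ∀ W : Submodule K V, W ∈ X.invtSubmodule → W ∈ Y.invtSubmodule →
      W ∈ Z.invtSubmodule → W = ⊥ ∨ W = ⊤) (μ : K) :
    Module.rank K (eigenspace Z μ) ≤ 1 := by
  obtain ⟨T, hCT, hT, hX, hY⟩ := h.exists_commute_casimir_eq_loop μ
  have hC := h.eigenspace_mem_invtSubmodule_casimir μ
  refine rank_submodule_le_one_of_commute_of_simple ![casimir X Z, T] ?_ ?_ fun P hP hinv ↦ ?_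
  · simp [Fin.forall_fin_two, hCT, hCT.symm]
  · simp [Fin.forall_fin_two, hC, hT]
  · exact h.eq_bot_or_eq_eigenspace_of_simple hsimple hP (hinv 0)
      (fun k hk ↦ hX k hk ▸ hinv 1) fun k hk ↦ hY k hk ▸ hinv 1

/-- on a non-zero finite-dimensional simple module over
`U = ℂ⟨X,Y,Z⟩/(XZ+ZX−2X, YZ+ZY+2Y, X²−Y²−Z)`, every eigenvalue of `Z` has
multiplicity one. -/
theorem UF_eigenvalues_multiplicity_one
    {V : Type*} [AddCommGroup V] [Module ℂ V] [FiniteDimensional ℂ V] [Nontrivial V]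
    (X Y Z : Module.End ℂ V)
    (hXZ : X * Z + Z * X = (2 : ℂ) • X)
    (hYZ : Y * Z + Z * Y = (-2 : ℂ) • Y)
    (hXYZ : X * X - Y * Y = Z)
    (hsimple : ∀ W : Submodule ℂ V, (∀ w ∈ W, X w ∈ W) → (∀ w ∈ W, Y w ∈ W) →
      (∀ w ∈ W, Z w ∈ W) → W = ⊥ ∨ W = ⊤) :
    ∀ lam : ℂ, Module.finrank ℂ (Module.End.eigenspace Z lam) ≤ 1 := by
  have h : IsUTriple X Y Z :=
    ⟨by rw [hXZ, two_smul, two_mul], by rw [hYZ, neg_smul, two_smul, two_mul], hXYZ⟩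
  exact fun lam ↦ finrank_le_of_rank_le
    (by simpa using UF_eigenvalues_multiplicity_one_general h hsimple lam)
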